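/- Let σ > 0 and N ≥ 1. Among nondecreasing functions with values in [m, M], equation (C⁺) admits a maximal solution R*, i.e. a nondecreasing solution satisfying R*(x) ≥ r(x) for every x ∈ ℝ whenever r is a nondecreasing solution of (C⁺) with values in [m, M]. This maximal solution is not constant, and every solution F of equation (E) with values in [m, M] satisfies F(x) ≤ R*(x) for all x ∈ ℝ. -/

import Mathlib

open MeasureTheory Filter Set

/-- Centered Gaussian density with variance `σ²`. -/
noncomputable def gq (σ z : ℝ) : ℝ :=
  Real.exp (-(z ^ 2) / (2 * σ ^ 2)) / (σ * Real.sqrt (2 * Real.pi))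

/-- The averaged kernel `q̄(σ,x,z)`. -/
noncomputable def gqbar (σ x z : ℝ) : ℝ :=
  if x = 0 then gq σ z else (1 / x) * ∫ y in (0:ℝ)..x, gq σ (y - z)

/-- `Φ⁺(y) = E[V·1_{V>y}]`. -/
noncomputable def Phip {Ω : Type*} [MeasurableSpace Ω] (P : Measure Ω) (V : Ω → ℝ) (y : ℝ) : ℝ :=
  ∫ ω in {ω | V ω > y}, V ω ∂P

/-- `Π⁺(y) = P(V > y)`. -/
noncomputable def Pip {Ω : Type*} [MeasurableSpace Ω] (P : Measure Ω) (V : Ω → ℝ) (y : ℝ) : ℝ :=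
  (P {ω | V ω > y}).toReal

/-- `Φ⁻(y) = E[V·1_{V≤y}]`. -/
noncomputable def Phim {Ω : Type*} [MeasurableSpace Ω] (P : Measure Ω) (V : Ω → ℝ) (y : ℝ) : ℝ :=
  ∫ ω in {ω | V ω ≤ y}, V ω ∂P

/-- `Π⁻(y) = P(V ≤ y)`. -/
noncomputable def Pim {Ω : Type*} [MeasurableSpace Ω] (P : Measure Ω) (V : Ω → ℝ) (y : ℝ) : ℝ :=
  (P {ω | V ω ≤ y}).toReal

/-- `Ψ⁺ = Φ⁺/Π⁺`. -/
noncomputable def Psip {Ω : Type*} [MeasurableSpace Ω] (P : Measure Ω) (V : Ω → ℝ) (y : ℝ) : ℝ :=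
  Phip P V y / Pip P V y

/-- `Ψ⁻ = Φ⁻/Π⁻`. -/
noncomputable def Psim {Ω : Type*} [MeasurableSpace Ω] (P : Measure Ω) (V : Ω → ℝ) (y : ℝ) : ℝ :=
  Phim P V y / Pim P V y

/-- `φ⁺_g`. -/
noncomputable def phip {Ω : Type*} [MeasurableSpace Ω] (P : Measure Ω) (V : Ω → ℝ)
    (σ : ℝ) (g : ℝ → ℝ) (x : ℝ) : ℝ :=
  (∫ z, Phip P V (g z) * gq σ (x - z)) / (∫ z, Pip P V (g z) * gq σ (x - z))

/-- `φ⁻_g`. -/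
noncomputable def phim {Ω : Type*} [MeasurableSpace Ω] (P : Measure Ω) (V : Ω → ℝ)
    (σ : ℝ) (g : ℝ → ℝ) (x : ℝ) : ℝ :=
  (∫ z, Phim P V (g z) * gq σ (x - z)) / (∫ z, Pim P V (g z) * gq σ (x - z))

/-- `φ_g`, equal to `φ⁺_g` on `[0,∞)` and `φ⁻_g` on `(−∞,0)`. -/
noncomputable def phig {Ω : Type*} [MeasurableSpace Ω] (P : Measure Ω) (V : Ω → ℝ)
    (σ : ℝ) (g : ℝ → ℝ) (x : ℝ) : ℝ :=
  if 0 ≤ x then phip P V σ g x else phim P V σ g x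

/-- The interior of the support of the law of `V` is `(m, M)` (with `V` bounded). -/
def SuppIoo {Ω : Type*} [MeasurableSpace Ω] (P : Measure Ω) (V : Ω → ℝ) (m M : ℝ) : Prop :=
  m < M ∧ (∀ᵐ ω ∂P, V ω ∈ Set.Icc m M) ∧
    (∀ y < M, 0 < P {ω | V ω > y}) ∧ (∀ y, m < y → 0 < P {ω | V ω ≤ y})

/-- Equation (E). -/
def SolvesE {Ω : Type*} [MeasurableSpace Ω] (P : Measure Ω) (V : Ω → ℝ)
    (σ : ℝ) (N : ℕ) (F : ℝ → ℝ) : Prop :=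
  ∀ x : ℝ, F x =
    ∫ z, ((1 / (N:ℝ)) * gq σ (x - z) + (((N:ℝ) - 1) / (N:ℝ)) * gqbar σ x z) * phig P V σ F z

/-- Equation (C⁺). -/
def SolvesCp {Ω : Type*} [MeasurableSpace Ω] (P : Measure Ω) (V : Ω → ℝ)
    (σ : ℝ) (N : ℕ) (R : ℝ → ℝ) : Prop :=
  ∀ x : ℝ, R x =
    (∫ z in Set.Ioi (0:ℝ),
      ((1 / (N:ℝ)) * gq σ (x - z) + (((N:ℝ) - 1) / (N:ℝ)) * gqbar σ x z) *
        ∫ y, Psip P V (R y) * gq σ (z - y)) +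
    (∫ ω, V ω ∂P) *
      ∫ z in Set.Iio (0:ℝ),
        ((1 / (N:ℝ)) * gq σ (x - z) + (((N:ℝ) - 1) / (N:ℝ)) * gqbar σ x z)

/-! Extend `Ψ⁺` by its limit `M` to `[M, ∞)`. The right-hand side of (C⁺) then becomes a monotone
operator on the complete lattice of nondecreasing functions with values in `[m, M]`, and by
Knaster–Tarski its greatest fixed point `R*` dominates every nondecreasing sub-solution. Since
`E[V] < M` and Gaussian kernels charge every half-line, `R* < M` everywhere, so the extension of
`Ψ⁺` is invisible and `R*` solves (C⁺). A constant solution `c < M` would satisfy `c = Ψ⁺(c)`, as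
one sees by letting `x → ∞`, whereas `Ψ⁺(c) > c`.

If `F` solves (E), then Chebyshev's association inequality, applied to the nondecreasing `Ψ⁺` and
the nonincreasing `Π⁺`, bounds `φ⁺_F` by the Gaussian average of `Ψ⁺ ∘ F`, while `Ψ⁻ ≤ E[V]` bounds
`φ⁻_F` by `E[V]`. Hence `F` is a sub-solution of (C⁺). It need not be nondecreasing, but its running
supremum is a nondecreasing sub-solution, so that `F ≤ R*`. -/

open ProbabilityTheory
open scoped Topology

section Order

variable {α β : Type*} [Preorder α] [ConditionallyCompleteLattice β] {a b : β}

-- Knaster–Tarski in the complete lattice `α →o Icc a b`.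
theorem exists_greatest_monotone_fixedPoint (hab : a ≤ b) {T : (α → β) → α → β}
    (hT : ∀ f, Monotone f → Monotone (T f)) (hT_mem : ∀ f, Monotone f → ∀ x, T f x ∈ Icc a b)
    (hT_mono : MonotoneOn T {f | Monotone f}) :
    ∃ R, Monotone R ∧ (∀ x, R x ∈ Icc a b) ∧ T R = R ∧
      ∀ f, Monotone f → (∀ x, f x ∈ Icc a b) → f ≤ T f → f ≤ R := by
  have : Fact (a ≤ b) := ⟨hab⟩
  let Φ : (α →o Icc a b) →o (α →o Icc a b) :=
    { toFun f := ⟨fun x => ⟨T (fun y => f y) x, hT_mem _ f.monotone x⟩,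
        fun _ _ hxy => hT _ f.monotone hxy⟩
      monotone' f g hfg := fun x => hT_mono f.monotone g.monotone (fun y => hfg y) x }
  refine ⟨fun x => Φ.gfp x, Φ.gfp.monotone, fun x => (Φ.gfp x).2, ?_, fun f hf hfmem hfT => ?_⟩
  · exact funext fun x => congrArg (fun R : α →o Icc a b => (R x : β)) Φ.map_gfp
  · exact Φ.le_gfp (a := ⟨fun x => ⟨f x, hfmem x⟩, hf⟩) hfT

/-- The least monotone majorant `x ↦ sup_{y ≤ x} F y` of a bounded function `F`; it turns
sub-solutions of a monotone equation into monotone sub-solutions. -/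
noncomputable def runningSup (F : α → β) (x : α) : β :=
  sSup (F '' Iic x)

variable {F : α → β}

lemma le_runningSup (hF : ∀ x, F x ≤ b) (x : α) : F x ≤ runningSup F x :=
  le_csSup ⟨b, forall_mem_image.2 fun y _ => hF y⟩ (mem_image_of_mem F self_mem_Iic)

lemma runningSup_le {x : α} {c : β} (h : ∀ y ≤ x, F y ≤ c) : runningSup F x ≤ c :=
  csSup_le (nonempty_Iic.image F) (forall_mem_image.2 h)

lemma monotone_runningSup (hF : ∀ x, F x ≤ b) : Monotone (runningSup F) := fun _ _ hxy =>
  runningSup_le fun _ hz => (le_csSup ⟨b, forall_mem_image.2 fun y _ => hF y⟩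
    (mem_image_of_mem F (hz.trans hxy)))

end Order

section Integrals

variable {α : Type*} [MeasurableSpace α] {μ : Measure α} {f g : α → ℝ}

lemma integral_lt_of_ae_le [IsProbabilityMeasure μ] {c : ℝ} (hf : Integrable f μ)
    (hle : ∀ᵐ x ∂μ, f x ≤ c) (hlt : ∃ᵐ x ∂μ, f x < c) : ∫ x, f x ∂μ < c := by
  have hpos : 0 < ∫ x, (c - f x) ∂μ := by
    rw [integral_pos_iff_support_of_nonneg_ae
      (hle.mono fun x hx => sub_nonneg.2 hx) ((integrable_const c).sub hf), pos_iff_ne_zero]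
    exact frequently_ae_iff.1 (hlt.mono fun x hx => (sub_pos.2 hx).ne')
  rw [integral_sub (integrable_const c) hf, integral_const, probReal_univ, one_smul] at hpos
  exact sub_pos.1 hpos

-- Chebyshev's association inequality: integrate `(f s - f t) * (g s - g t) ≤ 0` over `μ × μ`.
lemma integral_mul_le_of_antivary [IsProbabilityMeasure μ] (h : Antivary f g)
    (hf : Integrable f μ) (hg : Integrable g μ) (hfg : Integrable (fun x => f x * g x) μ) :
    ∫ x, f x * g x ∂μ ≤ (∫ x, f x ∂μ) * ∫ x, g x ∂μ := by
  have hdouble : ∫ p : α × α, ((f p.1 * g p.1 + f p.2 * g p.2) -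
      (f p.1 * g p.2 + g p.1 * f p.2)) ∂μ.prod μ ≤ 0 := integral_nonpos fun p => by
    have := antivary_iff_forall_mul_nonpos.1 h p.2 p.1
    simp only [Pi.zero_apply]
    linarith
  have hdiag : Integrable (fun p : α × α => f p.1 * g p.1 + f p.2 * g p.2) (μ.prod μ) :=
    (hfg.comp_fst μ).add (hfg.comp_snd μ)
  have hcross : Integrable (fun p : α × α => f p.1 * g p.2 + g p.1 * f p.2) (μ.prod μ) :=
    (hf.mul_prod hg).add (hg.mul_prod hf)
  rw [integral_sub hdiag hcross, integral_add (hfg.comp_fst μ) (hfg.comp_snd μ),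
    integral_add (hf.mul_prod hg) (hg.mul_prod hf),
    integral_fun_fst (fun x => f x * g x), integral_fun_snd (fun x => f x * g x),
    integral_prod_mul, integral_prod_mul, probReal_univ, one_smul] at hdouble
  linarith

lemma abs_integral_div_integral_le {C : ℝ} (hC : 0 ≤ C) (h : ∀ x, |f x| ≤ C * g x) :
    |(∫ x, f x ∂μ) / ∫ x, g x ∂μ| ≤ C := by
  by_cases hg : Integrable g μ
  · rw [abs_div]
    refine div_le_of_le_mul₀ (abs_nonneg _) hC ?_
    calc |∫ x, f x ∂μ| ≤ ∫ x, C * g x ∂μ :=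
          (Real.norm_eq_abs _).symm.trans_le
            (norm_integral_le_of_norm_le (hg.const_mul C) (.of_forall h))
      _ = C * ∫ x, g x ∂μ := integral_const_mul C g
      _ ≤ C * |∫ x, g x ∂μ| := by gcongr; exact le_abs_self _
  · simpa only [integral_undef hg, div_zero, abs_zero]

-- If `f` is not a.e. measurable, neither is any integrand, and all the integrals are `0`.
lemma measurable_integral_mul_comp_sub {k : ℝ → ℝ} (hk : Measurable k) (hk0 : ∀ z, k z ≠ 0)
    (f : ℝ → ℝ) : Measurable fun x => ∫ z, f z * k (x - z) := by
  by_cases hf : AEStronglyMeasurable f volume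
  · have hcongr : ∀ x, ∫ z, f z * k (x - z) = ∫ z, hf.mk f z * k (x - z) := fun x =>
      integral_congr_ae (hf.ae_eq_mk.mono fun z hz => by simp only [hz])
    have hmeas : Measurable fun p : ℝ × ℝ => hf.mk f p.2 * k (p.1 - p.2) :=
      (hf.stronglyMeasurable_mk.measurable.comp measurable_snd).mul
        (hk.comp (measurable_fst.sub measurable_snd))
    simp only [hcongr]
    exact hmeas.stronglyMeasurable.integral_prod_right.measurable
  · have hzero : ∀ x, ∫ z, f z * k (x - z) = 0 := fun x => by
      refine integral_non_aestronglyMeasurable fun h => hf ?_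
      have hinv : AEStronglyMeasurable (fun z => (k (x - z))⁻¹) volume :=
        (hk.comp (measurable_const.sub measurable_id)).inv.aestronglyMeasurable
      exact (h.mul hinv).congr (.of_forall fun z => mul_inv_cancel_right₀ (hk0 _) _)
    simp only [hzero, measurable_const]

lemma neBot_inf_ae_of_measure_ne_zero {l : Filter α} (h : ∀ s ∈ l, μ s ≠ 0) :
    (l ⊓ ae μ).NeBot :=
  inf_neBot_iff_frequently_left.2 fun hp => frequently_ae_iff.2 (h _ hp)

instance : (atTop ⊓ ae (volume : Measure ℝ)).NeBot :=
  neBot_inf_ae_of_measure_ne_zero fun s hs => by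
    obtain ⟨a, ha⟩ := mem_atTop_sets.1 hs
    exact (measure_mono_null (t := s) (s := Ici a) ha).mt (by simp)

instance : (atBot ⊓ ae (volume : Measure ℝ)).NeBot :=
  neBot_inf_ae_of_measure_ne_zero fun s hs => by
    obtain ⟨a, ha⟩ := mem_atBot_sets.1 hs
    exact (measure_mono_null (t := s) (s := Iic a) ha).mt (by simp)

lemma eq_of_tendsto_of_ae_eq {F : ℝ → ℝ} {c L : ℝ} {l : Filter ℝ}
    [(l ⊓ ae (volume : Measure ℝ)).NeBot] (hL : Tendsto F l (𝓝 L)) (hF : ∀ᵐ x, F x = c) :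
    L = c :=
  tendsto_nhds_unique (hL.mono_left inf_le_left) <|
    tendsto_const_nhds.congr' <| (hF.mono fun _ h => h.symm).filter_mono inf_le_right

end Integrals

/-- Bounded measurable functions, the class on which the averaging operators act. -/
structure IsBddMeasurable {α : Type*} [MeasurableSpace α] (f : α → ℝ) : Prop where
  measurable : Measurable f
  bounded : ∃ C, ∀ x, |f x| ≤ C

namespace IsBddMeasurable

variable {α β : Type*} [MeasurableSpace α] [MeasurableSpace β] {f : α → ℝ}

lemma of_mem_Icc {a b : ℝ} (hf : Measurable f) (h : ∀ x, f x ∈ Icc a b) : IsBddMeasurable f :=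
  ⟨hf, max |a| |b|, fun x => abs_le_max_abs_abs (h x).1 (h x).2⟩

lemma const (c : ℝ) : IsBddMeasurable fun _ : α => c :=
  ⟨measurable_const, |c|, fun _ => le_rfl⟩

lemma comp (hf : IsBddMeasurable f) {g : β → α} (hg : Measurable g) :
    IsBddMeasurable fun x => f (g x) :=
  ⟨hf.measurable.comp hg, hf.bounded.imp fun _ hC x => hC (g x)⟩

lemma mul (hf : IsBddMeasurable f) {g : α → ℝ} (hg : IsBddMeasurable g) :
    IsBddMeasurable fun x => f x * g x := by
  obtain ⟨C, hC⟩ := hf.bounded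
  obtain ⟨D, hD⟩ := hg.bounded
  refine ⟨hf.measurable.mul hg.measurable, C * D, fun x => ?_⟩
  rw [abs_mul]
  exact mul_le_mul (hC x) (hD x) (abs_nonneg _) ((abs_nonneg _).trans (hC x))

lemma integrable (hf : IsBddMeasurable f) (μ : Measure α) [IsFiniteMeasure μ] :
    Integrable f μ :=
  hf.bounded.elim fun C hC =>
    .of_bound hf.measurable.aestronglyMeasurable C (.of_forall hC)

lemma integrable_mul (hf : IsBddMeasurable f) {μ : Measure α} {g : α → ℝ}
    (hg : Integrable g μ) : Integrable (fun x => f x * g x) μ :=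
  hf.bounded.elim fun _ hC =>
    hg.bdd_mul hf.measurable.aestronglyMeasurable (.of_forall hC)

end IsBddMeasurable

section Gaussian

variable {σ : ℝ}

/-- The centered Gaussian law of standard deviation `σ`, whose density is `gq σ`. -/
noncomputable abbrev gaussLaw (σ : ℝ) : Measure ℝ :=
  gaussianReal 0 (σ ^ 2).toNNReal

lemma gq_eq_gaussianPDFReal (hσ : 0 < σ) (z : ℝ) :
    gq σ z = gaussianPDFReal 0 (σ ^ 2).toNNReal z := by
  have hsqrt : √(2 * Real.pi * σ ^ 2) = σ * √(2 * Real.pi) := by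
    rw [Real.sqrt_mul (by positivity), Real.sqrt_sq hσ.le, mul_comm]
  simp only [gq, gaussianPDFReal, Real.coe_toNNReal _ (sq_nonneg σ), sub_zero, hsqrt]
  rw [div_eq_inv_mul]

lemma gq_pos (hσ : 0 < σ) (z : ℝ) : 0 < gq σ z := by
  unfold gq
  positivity

lemma gq_neg (σ z : ℝ) : gq σ (-z) = gq σ z := by
  simp only [gq, neg_sq]

lemma continuous_gq (σ : ℝ) : Continuous (gq σ) := by
  unfold gq
  fun_prop

lemma toNNReal_sq_ne_zero (hσ : 0 < σ) : (σ ^ 2).toNNReal ≠ 0 :=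
  (Real.toNNReal_pos.2 (pow_pos hσ 2)).ne'

lemma integral_mul_gq (hσ : 0 < σ) (f : ℝ → ℝ) (x : ℝ) :
    ∫ z, f z * gq σ (x - z) = ∫ w, f (x + w) ∂gaussLaw σ := by
  rw [integral_gaussianReal_eq_integral_smul (toNNReal_sq_ne_zero hσ),
    ← integral_add_left_eq_self (fun z => f z * gq σ (x - z)) x]
  refine integral_congr_ae (.of_forall fun w => ?_)
  simp only [sub_add_cancel_left, gq_neg, ← gq_eq_gaussianPDFReal hσ, smul_eq_mul, mul_comm]

lemma integral_gq (hσ : 0 < σ) (x : ℝ) : ∫ z, gq σ (x - z) = 1 := by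
  simpa using integral_mul_gq hσ (fun _ => 1) x

lemma integrable_gq (hσ : 0 < σ) (x : ℝ) : Integrable fun z => gq σ (x - z) :=
  .of_integral_ne_zero <| by rw [integral_gq hσ x]; exact one_ne_zero

lemma integral_mul_gq_pos {f : ℝ → ℝ} (hσ : 0 < σ) (hf : IsBddMeasurable f) (hf0 : ∀ z, 0 ≤ f z)
    (hpos : ∃ᵐ z, f z ≠ 0) (x : ℝ) : 0 < ∫ z, f z * gq σ (x - z) := by
  rw [integral_pos_iff_support_of_nonneg (fun z => mul_nonneg (hf0 z) (gq_pos hσ _).le)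
    (hf.integrable_mul (integrable_gq hσ x)), pos_iff_ne_zero]
  exact frequently_ae_iff.1 (hpos.mono fun z hz => mul_ne_zero hz (gq_pos hσ _).ne')

lemma integral_comp_mul_gq_of_ae_eq (hσ : 0 < σ) (h : ℝ → ℝ) {F : ℝ → ℝ} {c : ℝ}
    (hF : ∀ᵐ z, F z = c) (x : ℝ) : ∫ z, h (F z) * gq σ (x - z) = h c := by
  have hcongr : (fun z => h (F z) * gq σ (x - z)) =ᵐ[volume] fun z => h c * gq σ (x - z) :=
    hF.mono fun z hz => by simp only [hz]
  rw [integral_congr_ae hcongr, integral_const_mul, integral_gq hσ, mul_one]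

lemma gaussLaw_Iio_ne_zero (hσ : 0 < σ) (a : ℝ) : gaussLaw σ (Iio a) ≠ 0 :=
  ((gaussianReal_absolutelyContinuous' 0 (toNNReal_sq_ne_zero hσ)) (s := Iio a)).mt (by simp)

lemma integrable_prod_gq (hσ : 0 < σ) (ν : Measure ℝ) [IsFiniteMeasure ν] (x : ℝ) :
    Integrable (fun p : ℝ × ℝ => gq σ (p.1 * x - p.2)) (ν.prod volume) := by
  have hcont : Continuous fun p : ℝ × ℝ => gq σ (p.1 * x - p.2) :=
    (continuous_gq σ).comp (by fun_prop)
  refine (integrable_prod_iff hcont.aestronglyMeasurable).2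
    ⟨.of_forall fun u => integrable_gq hσ (u * x), ?_⟩
  simp only [Real.norm_of_nonneg (gq_pos hσ _).le, integral_gq hσ]
  exact integrable_const 1

end Gaussian

section GaussAvg

/-- The averaging operator `f ↦ E[f (U x + W)]`, where `U` has law `ν` and `W` is an independent
centered Gaussian of standard deviation `σ`. It is the convolution with `gq σ` for
`ν = dirac 1`, and the kernel operator of (E) and (C⁺) for `ν = slopeLaw N`. -/
noncomputable def gaussAvg (ν : Measure ℝ) (σ : ℝ) (f : ℝ → ℝ) (x : ℝ) : ℝ :=
  ∫ p, f (p.1 * x + p.2) ∂ν.prod (gaussLaw σ)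

variable {ν : Measure ℝ} {σ : ℝ} {f g : ℝ → ℝ}

lemma gaussAvg_dirac_one (hσ : 0 < σ) (f : ℝ → ℝ) (x : ℝ) :
    gaussAvg (.dirac 1) σ f x = ∫ z, f z * gq σ (x - z) := by
  rw [gaussAvg, Measure.dirac_prod, measurableEmbedding_prodMk_left 1 |>.integral_map,
    integral_mul_gq hσ]
  simp only [one_mul]

lemma ae_prod_gaussLaw_fst_pos (hν : ∀ᵐ u ∂ν, 0 < u) :
    ∀ᵐ p ∂ν.prod (gaussLaw σ), 0 < p.1 :=
  Measure.quasiMeasurePreserving_fst.ae hν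

variable [IsProbabilityMeasure ν]

lemma gaussAvg_const (c x : ℝ) : gaussAvg ν σ (fun _ => c) x = c := by
  simp only [gaussAvg, integral_const, probReal_univ, one_smul]

lemma IsBddMeasurable.integrable_gaussAvg (hf : IsBddMeasurable f) (x : ℝ) :
    Integrable (fun p : ℝ × ℝ => f (p.1 * x + p.2)) (ν.prod (gaussLaw σ)) :=
  (hf.comp (by fun_prop)).integrable _

lemma gaussAvg_mono (hf : IsBddMeasurable f) (hg : IsBddMeasurable g) (hfg : f ≤ g) :
    gaussAvg ν σ f ≤ gaussAvg ν σ g := fun x =>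
  integral_mono (hf.integrable_gaussAvg x) (hg.integrable_gaussAvg x) fun _ => hfg _

lemma gaussAvg_mem_Icc {a b : ℝ} (hf : Measurable f) (hfab : ∀ z, f z ∈ Icc a b) (x : ℝ) :
    gaussAvg ν σ f x ∈ Icc a b := by
  have hbdd := IsBddMeasurable.of_mem_Icc hf hfab
  constructor
  · rw [← gaussAvg_const (ν := ν) (σ := σ) a x]
    exact gaussAvg_mono (.const a) hbdd (fun z => (hfab z).1) x
  · rw [← gaussAvg_const (ν := ν) (σ := σ) b x]
    exact gaussAvg_mono hbdd (.const b) (fun z => (hfab z).2) x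

lemma IsBddMeasurable.gaussAvg (hf : IsBddMeasurable f) :
    IsBddMeasurable (gaussAvg ν σ f) := by
  obtain ⟨C, hC⟩ := hf.bounded
  have hmeas : Measurable (Function.uncurry fun (x : ℝ) (p : ℝ × ℝ) => f (p.1 * x + p.2)) :=
    hf.measurable.comp (by fun_prop)
  exact of_mem_Icc hmeas.stronglyMeasurable.integral_prod_right.measurable
    (gaussAvg_mem_Icc hf.measurable fun z => abs_le.1 (hC z))

lemma gaussAvg_mul_le_of_antivary (hf : IsBddMeasurable f) (hg : IsBddMeasurable g)
    (h : Antivary f g) (x : ℝ) :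
    gaussAvg ν σ (fun z => f z * g z) x ≤ gaussAvg ν σ f x * gaussAvg ν σ g x :=
  integral_mul_le_of_antivary (fun _ _ hlt => h hlt) (hf.integrable_gaussAvg x)
    (hg.integrable_gaussAvg x) ((hf.mul hg).integrable_gaussAvg x)

lemma gaussAvg_lt (hσ : 0 < σ) (hf : IsBddMeasurable f) {c : ℝ} (hle : ∀ z, f z ≤ c)
    (hlt : ∀ z < 0, f z < c) (x : ℝ) : gaussAvg ν σ f x < c := by
  refine integral_lt_of_ae_le (hf.integrable_gaussAvg x) (.of_forall fun _ => hle _) fun hnot => ?_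
  obtain ⟨u, hu⟩ := (Measure.ae_ae_of_ae_prod hnot).exists
  refine gaussLaw_Iio_ne_zero hσ (-(u * x)) (measure_mono_null (fun w hw => ?_) hu)
  exact not_not.2 (hlt _ (by linarith [mem_Iio.1 hw]))

lemma monotone_gaussAvg (hν : ∀ᵐ u ∂ν, 0 < u) (hf : IsBddMeasurable f) (hmono : Monotone f) :
    Monotone (gaussAvg ν σ f) := fun x y hxy => by
  refine integral_mono_ae (hf.integrable_gaussAvg x) (hf.integrable_gaussAvg y) ?_
  filter_upwards [ae_prod_gaussLaw_fst_pos hν] with p hp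
  exact hmono (by gcongr)

lemma tendsto_gaussAvg (hν : ∀ᵐ u ∂ν, 0 < u) (hf : IsBddMeasurable f) {l : Filter ℝ}
    [l.IsCountablyGenerated] {L : ℝ} (hL : Tendsto f l (𝓝 L))
    (hl : ∀ u > 0, ∀ w, Tendsto (fun x => u * x + w) l l) :
    Tendsto (gaussAvg ν σ f) l (𝓝 L) := by
  obtain ⟨C, hC⟩ := hf.bounded
  have hlim : Tendsto (gaussAvg ν σ f) l (𝓝 (∫ _, L ∂ν.prod (gaussLaw σ))) := by
    refine tendsto_integral_filter_of_dominated_convergence (fun _ => C)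
      (.of_forall fun x => (hf.integrable_gaussAvg x).aestronglyMeasurable)
      (.of_forall fun x => .of_forall fun p => hC _) (integrable_const C) ?_
    filter_upwards [ae_prod_gaussLaw_fst_pos hν] with p hp
    exact hL.comp (hl p.1 hp p.2)
  rwa [integral_const, probReal_univ, one_smul] at hlim

lemma tendsto_gaussAvg_atTop (hν : ∀ᵐ u ∂ν, 0 < u) (hf : IsBddMeasurable f) {L : ℝ}
    (hL : Tendsto f atTop (𝓝 L)) : Tendsto (gaussAvg ν σ f) atTop (𝓝 L) :=
  tendsto_gaussAvg hν hf hL fun _ hu w =>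
    tendsto_atTop_add_const_right _ w (tendsto_id.const_mul_atTop hu)

lemma tendsto_gaussAvg_atBot (hν : ∀ᵐ u ∂ν, 0 < u) (hf : IsBddMeasurable f) {L : ℝ}
    (hL : Tendsto f atBot (𝓝 L)) : Tendsto (gaussAvg ν σ f) atBot (𝓝 L) :=
  tendsto_gaussAvg hν hf hL fun _ hu w =>
    tendsto_atBot_add_const_right _ w (tendsto_id.const_mul_atBot hu)

end GaussAvg

section Kernel

variable {σ : ℝ} {f : ℝ → ℝ}

lemma integrable_prod_gq_mul (hσ : 0 < σ) (ν : Measure ℝ) [IsFiniteMeasure ν]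
    (hf : IsBddMeasurable f) (x : ℝ) :
    Integrable (fun p : ℝ × ℝ => gq σ (p.1 * x - p.2) * f p.2) (ν.prod volume) := by
  simpa only [mul_comm] using (hf.comp measurable_snd).integrable_mul (integrable_prod_gq hσ ν x)

lemma integral_integral_gq_mul (hσ : 0 < σ) (ν : Measure ℝ) [IsProbabilityMeasure ν]
    (hf : IsBddMeasurable f) (x : ℝ) :
    ∫ z, (∫ u, gq σ (u * x - z) ∂ν) * f z = gaussAvg ν σ f x := by
  calc ∫ z, (∫ u, gq σ (u * x - z) ∂ν) * f z
      = ∫ z, ∫ u, gq σ (u * x - z) * f z ∂ν := by simp only [integral_mul_const]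
    _ = ∫ u, (∫ z, gq σ (u * x - z) * f z) ∂ν :=
        (integral_integral_swap (integrable_prod_gq_mul hσ ν hf x)).symm
    _ = ∫ u, ∫ w, f (u * x + w) ∂gaussLaw σ ∂ν := by
        simp only [← integral_mul_gq hσ, mul_comm (gq σ _)]
    _ = gaussAvg ν σ f x := (integral_prod _ (hf.integrable_gaussAvg x)).symm

/-- The law of the random slope `U` for which `E[gq σ (U x - z)]` is the kernel of (E) and (C⁺):
`U = 1` with probability `1/N`, and `U` is uniform on `(0, 1]` otherwise. -/
noncomputable def slopeLaw (N : ℕ) : Measure ℝ :=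
  ENNReal.ofReal (1 / N) • Measure.dirac 1 +
    ENNReal.ofReal ((N - 1) / N) • volume.restrict (Ioc 0 1)

lemma slopeLaw_ae_pos (N : ℕ) : ∀ᵐ u ∂slopeLaw N, 0 < u :=
  ae_add_measure_iff.2 ⟨Measure.ae_smul_measure ((ae_dirac_iff measurableSet_Ioi).2 one_pos) _,
    Measure.ae_smul_measure ((ae_restrict_mem measurableSet_Ioc).mono fun _ hu => hu.1) _⟩

variable (N : ℕ) [NeZero N]

lemma sub_one_div_natCast_nonneg : 0 ≤ ((N : ℝ) - 1) / N :=
  div_nonneg (sub_nonneg.2 (Nat.one_le_cast.2 NeZero.one_le)) N.cast_nonneg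

instance : IsProbabilityMeasure (slopeLaw N) where
  measure_univ := by
    have hsum : 1 / (N : ℝ) + (N - 1) / N = 1 := by
      rw [← add_div, add_sub_cancel, div_self (NeZero.ne _)]
    simp only [slopeLaw, Measure.add_apply, Measure.smul_apply, measure_univ, smul_eq_mul,
      mul_one, Measure.restrict_apply_univ, Real.volume_Ioc, sub_zero, ENNReal.ofReal_one]
    rw [← ENNReal.ofReal_add (by positivity) (sub_one_div_natCast_nonneg N), hsum,
      ENNReal.ofReal_one]

-- Substitute `y = u x` in the average over `[0, x]`; at `x = 0` both sides are `gq σ z`.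
lemma gqbar_eq_setIntegral (σ x z : ℝ) : gqbar σ x z = ∫ u in Ioc 0 1, gq σ (u * x - z) := by
  rw [← intervalIntegral.integral_of_le zero_le_one, gqbar]
  split_ifs with hx
  · simp only [hx, mul_zero, zero_sub, gq_neg, intervalIntegral.integral_const, sub_zero, one_smul]
  · simp only [intervalIntegral.integral_comp_mul_right (fun y => gq σ (y - z)) hx, zero_mul,
      one_mul, one_div, smul_eq_mul]

lemma kernel_eq_integral_slopeLaw (σ x z : ℝ) :
    1 / (N : ℝ) * gq σ (x - z) + (N - 1) / N * gqbar σ x z =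
      ∫ u, gq σ (u * x - z) ∂slopeLaw N := by
  have hcont : Continuous fun u => gq σ (u * x - z) := (continuous_gq σ).comp (by fun_prop)
  have hdirac : Integrable (fun u => gq σ (u * x - z)) (Measure.dirac 1) :=
    integrable_dirac (by simp)
  have hunif : IntegrableOn (fun u => gq σ (u * x - z)) (Ioc 0 1) :=
    hcont.integrableOn_Ioc
  rw [slopeLaw, integral_add_measure (hdirac.smul_measure ENNReal.ofReal_ne_top)
      (hunif.smul_measure ENNReal.ofReal_ne_top),
    integral_smul_measure, integral_smul_measure, integral_dirac, one_mul,
    ENNReal.toReal_ofReal (by positivity), ENNReal.toReal_ofReal (sub_one_div_natCast_nonneg N),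
    gqbar_eq_setIntegral, smul_eq_mul, smul_eq_mul]

lemma integral_kernel_mul (hσ : 0 < σ) (hf : IsBddMeasurable f) (x : ℝ) :
    ∫ z, (1 / (N : ℝ) * gq σ (x - z) + (N - 1) / N * gqbar σ x z) * f z =
      gaussAvg (slopeLaw N) σ f x := by
  simp only [kernel_eq_integral_slopeLaw N, integral_integral_gq_mul hσ (slopeLaw N) hf]

lemma integrable_kernel_mul (hσ : 0 < σ) (hf : IsBddMeasurable f) (x : ℝ) :
    Integrable fun z => (1 / (N : ℝ) * gq σ (x - z) + (N - 1) / N * gqbar σ x z) * f z := by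
  simpa only [kernel_eq_integral_slopeLaw N, integral_mul_const] using
    (integrable_prod_gq_mul hσ (slopeLaw N) hf x).integral_prod_right

end Kernel

section Splice

variable {σ e a b : ℝ} {f g : ℝ → ℝ}

/-- The function averaged by the kernel of (C⁺): the convolution of `f` with `gq σ` on `[0, ∞)`,
and the constant `e` (which is `E[V]` in (C⁺)) on `(-∞, 0)`. -/
noncomputable def splicedAvg (σ e : ℝ) (f : ℝ → ℝ) : ℝ → ℝ :=
  (Ici 0).piecewise (gaussAvg (.dirac 1) σ f) fun _ => e

lemma splicedAvg_of_nonneg {z : ℝ} (hz : 0 ≤ z) :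
    splicedAvg σ e f z = gaussAvg (.dirac 1) σ f z :=
  piecewise_eq_of_mem (Ici 0) _ _ hz

lemma splicedAvg_of_neg {z : ℝ} (hz : z < 0) : splicedAvg σ e f z = e :=
  piecewise_eq_of_notMem (Ici 0) _ _ hz.not_ge

lemma splicedAvg_mono (hf : IsBddMeasurable f) (hg : IsBddMeasurable g) (hfg : f ≤ g) :
    splicedAvg σ e f ≤ splicedAvg σ e g :=
  piecewise_mono (fun z _ => gaussAvg_mono hf hg hfg z) fun _ _ => le_rfl

lemma splicedAvg_mem_Icc (he : e ∈ Icc a b) (hf : Measurable f) (hfab : ∀ z, f z ∈ Icc a b)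
    (z : ℝ) : splicedAvg σ e f z ∈ Icc a b := by
  rcases le_or_gt 0 z with hz | hz
  · exact splicedAvg_of_nonneg hz ▸ gaussAvg_mem_Icc hf hfab z
  · exact splicedAvg_of_neg (σ := σ) (f := f) hz ▸ he

lemma IsBddMeasurable.splicedAvg (hf : IsBddMeasurable f) (σ e : ℝ) :
    IsBddMeasurable (splicedAvg σ e f) where
  measurable := hf.gaussAvg.measurable.piecewise measurableSet_Ici measurable_const
  bounded := by
    obtain ⟨C, hC⟩ := (hf.gaussAvg (ν := .dirac 1) (σ := σ)).bounded
    refine ⟨max C |e|, fun z => ?_⟩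
    rcases le_or_gt 0 z with hz | hz
    · exact splicedAvg_of_nonneg (e := e) hz ▸ (hC z).trans (le_max_left _ _)
    · exact splicedAvg_of_neg (σ := σ) (f := f) hz ▸ le_max_right _ _

lemma monotone_splicedAvg (hf : IsBddMeasurable f) (hmono : Monotone f) (he : ∀ z, e ≤ f z) :
    Monotone (splicedAvg σ e f) := by
  have hle : ∀ z, e ≤ gaussAvg (.dirac 1) σ f z := fun z => by
    rw [← gaussAvg_const (ν := .dirac 1) (σ := σ) e z]
    exact gaussAvg_mono (.const e) hf he z
  have hpos : ∀ᵐ u ∂Measure.dirac (1 : ℝ), 0 < u := (ae_dirac_iff measurableSet_Ioi).2 one_pos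
  intro x y hxy
  rcases le_or_gt 0 x with hx | hx
  · rw [splicedAvg_of_nonneg hx, splicedAvg_of_nonneg (hx.trans hxy)]
    exact monotone_gaussAvg hpos hf hmono hxy
  · rw [splicedAvg_of_neg hx]
    rcases le_or_gt 0 y with hy | hy
    · exact splicedAvg_of_nonneg (e := e) hy ▸ hle y
    · exact (splicedAvg_of_neg hy).ge

lemma tendsto_splicedAvg_atTop (hf : IsBddMeasurable f) {L : ℝ} (hL : Tendsto f atTop (𝓝 L)) :
    Tendsto (splicedAvg σ e f) atTop (𝓝 L) :=
  (tendsto_gaussAvg_atTop ((ae_dirac_iff measurableSet_Ioi).2 one_pos) hf hL).congr'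
    ((eventually_ge_atTop 0).mono fun _ hz => (splicedAvg_of_nonneg hz).symm)

end Splice

section CplusOp

variable {σ e a b : ℝ} {N : ℕ} [NeZero N] {f g : ℝ → ℝ}

/-- The right-hand side of (C⁺), with `f` in place of `Ψ⁺ ∘ R` and `e` in place of `E[V]`. -/
noncomputable def cplusOp (σ : ℝ) (N : ℕ) (e : ℝ) (f : ℝ → ℝ) : ℝ → ℝ :=
  gaussAvg (slopeLaw N) σ (splicedAvg σ e f)

lemma cplusOp_eq (hσ : 0 < σ) (hf : IsBddMeasurable f) (x : ℝ) :
    cplusOp σ N e f x =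
      (∫ z in Ioi 0, (1 / (N : ℝ) * gq σ (x - z) + (N - 1) / N * gqbar σ x z) *
        ∫ y, f y * gq σ (z - y)) +
      e * ∫ z in Iio 0, (1 / (N : ℝ) * gq σ (x - z) + (N - 1) / N * gqbar σ x z) := by
  have hs := hf.splicedAvg σ e
  rw [cplusOp, ← integral_kernel_mul N hσ hs,
    ← integral_add_compl (measurableSet_Ioi (a := (0 : ℝ))) (integrable_kernel_mul N hσ hs x),
    compl_Ioi, integral_Iic_eq_integral_Iio, ← integral_const_mul]
  congr 1
  · refine setIntegral_congr_fun measurableSet_Ioi fun z hz => ?_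
    simp only [splicedAvg_of_nonneg (le_of_lt (mem_Ioi.1 hz)), gaussAvg_dirac_one hσ]
  · refine setIntegral_congr_fun measurableSet_Iio fun z hz => ?_
    simp only [splicedAvg_of_neg (mem_Iio.1 hz), mul_comm]

lemma cplusOp_mono (hf : IsBddMeasurable f) (hg : IsBddMeasurable g) (hfg : f ≤ g) :
    cplusOp σ N e f ≤ cplusOp σ N e g :=
  gaussAvg_mono (hf.splicedAvg σ e) (hg.splicedAvg σ e) (splicedAvg_mono hf hg hfg)

lemma monotone_cplusOp (hf : IsBddMeasurable f) (hmono : Monotone f) (he : ∀ z, e ≤ f z) :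
    Monotone (cplusOp σ N e f) :=
  monotone_gaussAvg (slopeLaw_ae_pos N) (hf.splicedAvg σ e) (monotone_splicedAvg hf hmono he)

lemma cplusOp_mem_Icc (he : e ∈ Icc a b) (hf : Measurable f) (hfab : ∀ z, f z ∈ Icc a b)
    (x : ℝ) : cplusOp σ N e f x ∈ Icc a b :=
  gaussAvg_mem_Icc ((IsBddMeasurable.of_mem_Icc hf hfab).splicedAvg σ e).measurable
    (splicedAvg_mem_Icc he hf hfab) x

lemma cplusOp_lt (hσ : 0 < σ) (he : e ∈ Ico a b) (hf : Measurable f) (hfab : ∀ z, f z ∈ Icc a b)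
    (x : ℝ) : cplusOp σ N e f x < b :=
  gaussAvg_lt hσ ((IsBddMeasurable.of_mem_Icc hf hfab).splicedAvg σ e)
    (fun z => (splicedAvg_mem_Icc (Ico_subset_Icc_self he) hf hfab z).2)
    (fun _ hz => (splicedAvg_of_neg hz).trans_lt he.2) x

lemma tendsto_cplusOp_atTop (hf : IsBddMeasurable f) {L : ℝ} (hL : Tendsto f atTop (𝓝 L)) :
    Tendsto (cplusOp σ N e f) atTop (𝓝 L) :=
  tendsto_gaussAvg_atTop (slopeLaw_ae_pos N) (hf.splicedAvg σ e) (tendsto_splicedAvg_atTop hf hL)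

lemma solvesCp_iff {Ω : Type*} [MeasurableSpace Ω] {P : Measure Ω} {V : Ω → ℝ} {R : ℝ → ℝ}
    (hσ : 0 < σ) (hR : IsBddMeasurable fun y => Psip P V (R y)) :
    SolvesCp P V σ N R ↔ cplusOp σ N (∫ ω, V ω ∂P) (fun y => Psip P V (R y)) = R := by
  simp only [SolvesCp, ← cplusOp_eq hσ hR, funext_iff, eq_comm]

end CplusOp

section Tail

variable {Ω : Type*} [MeasurableSpace Ω] {P : Measure Ω} {V : Ω → ℝ}

lemma phip_add_phim (hVm : Measurable V) (hV : Integrable V P) (y : ℝ) :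
    Phip P V y + Phim P V y = ∫ ω, V ω ∂P := by
  simpa only [Phip, Phim, compl_ofPred, gt_iff_lt, not_lt] using
    integral_add_compl (measurableSet_lt measurable_const hVm : MeasurableSet {ω | V ω > y}) hV

lemma pip_nonneg (y : ℝ) : 0 ≤ Pip P V y := ENNReal.toReal_nonneg

lemma pim_nonneg (y : ℝ) : 0 ≤ Pim P V y := ENNReal.toReal_nonneg

variable [IsProbabilityMeasure P]

lemma pip_add_pim (hVm : Measurable V) (y : ℝ) : Pip P V y + Pim P V y = 1 := by
  simpa only [Pip, Pim, Measure.real, compl_ofPred, gt_iff_lt, not_lt] using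
    probReal_add_probReal_compl (μ := P)
      (measurableSet_lt measurable_const hVm : MeasurableSet {ω | V ω > y})

lemma antitone_pip : Antitone (Pip P V) := fun _ _ hab =>
  measureReal_mono fun _ hω => hab.trans_lt hω

lemma monotone_pim : Monotone (Pim P V) := fun _ _ hab =>
  measureReal_mono fun _ hω => le_trans hω hab

lemma isBddMeasurable_pip {F : ℝ → ℝ} (hF : Measurable F) :
    IsBddMeasurable fun z => Pip P V (F z) :=
  .of_mem_Icc (antitone_pip.measurable.comp hF) fun _ => ⟨pip_nonneg _, measureReal_le_one⟩

lemma isBddMeasurable_pim {F : ℝ → ℝ} (hF : Measurable F) :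
    IsBddMeasurable fun z => Pim P V (F z) :=
  .of_mem_Icc (monotone_pim.measurable.comp hF) fun _ => ⟨pim_nonneg _, measureReal_le_one⟩

lemma phip_sub_mul_pip (hV : Integrable V P) (y c : ℝ) :
    Phip P V y - c * Pip P V y = ∫ ω in {ω | V ω > y}, (V ω - c) ∂P := by
  rw [integral_sub hV.integrableOn (integrable_const c), setIntegral_const, smul_eq_mul, mul_comm]
  rfl

-- Lowering the threshold from `b` to `a` adds to `E[(V - c) 1_{V > b}]` only values `V ≤ b ≤ c`.
lemma phip_sub_mul_pip_le (hVm : Measurable V) (hV : Integrable V P) {a b c : ℝ} (hab : a ≤ b)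
    (hbc : b ≤ c) : Phip P V a - c * Pip P V a ≤ Phip P V b - c * Pip P V b := by
  have hmeas (y : ℝ) : MeasurableSet {ω | V ω > y} := measurableSet_lt measurable_const hVm
  have hint : Integrable (fun ω => V ω - c) P := hV.sub (integrable_const c)
  rw [phip_sub_mul_pip hV, phip_sub_mul_pip hV, ← integral_indicator (hmeas a),
    ← integral_indicator (hmeas b)]
  refine integral_mono (hint.indicator (hmeas a)) (hint.indicator (hmeas b)) fun ω => ?_
  simp only [indicator, mem_ofPred_eq]
  split_ifs <;> linarith

end Tail

/-- The function `Ψ⁺` extended by its left limit `M` to `[M, ∞)`; there `Π⁺ = 0`, so that `Psip`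
takes the junk value `0 / 0 = 0`. -/
noncomputable def psiTop {Ω : Type*} [MeasurableSpace Ω] (P : Measure Ω) (V : Ω → ℝ)
    (M y : ℝ) : ℝ :=
  if y < M then Psip P V y else M

namespace SuppIoo

variable {Ω : Type*} [MeasurableSpace Ω] {P : Measure Ω} {V : Ω → ℝ} {m M y : ℝ}

lemma lt (hs : SuppIoo P V m M) : m < M := hs.1

lemma ae_mem_Icc (hs : SuppIoo P V m M) : ∀ᵐ ω ∂P, V ω ∈ Icc m M := hs.2.1

lemma measure_gt_eq_zero (hs : SuppIoo P V m M) (hy : M ≤ y) : P {ω | V ω > y} = 0 :=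
  measure_eq_zero_iff_ae_notMem.2 (hs.ae_mem_Icc.mono fun _ h => (h.2.trans hy).not_gt)

lemma pip_eq_zero (hs : SuppIoo P V m M) (hy : M ≤ y) : Pip P V y = 0 := by
  rw [Pip, hs.measure_gt_eq_zero hy, ENNReal.toReal_zero]

lemma phip_eq_zero (hs : SuppIoo P V m M) (hy : M ≤ y) : Phip P V y = 0 :=
  setIntegral_measure_zero V (hs.measure_gt_eq_zero hy)

lemma psip_eq_zero (hs : SuppIoo P V m M) (hy : M ≤ y) : Psip P V y = 0 := by
  rw [Psip, hs.pip_eq_zero hy, div_zero]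

variable [IsProbabilityMeasure P]

lemma pip_pos (hs : SuppIoo P V m M) (hy : y < M) : 0 < Pip P V y :=
  ENNReal.toReal_pos (hs.2.2.1 y hy).ne' (measure_ne_top P _)

lemma pim_pos (hs : SuppIoo P V m M) (hy : m < y) : 0 < Pim P V y :=
  ENNReal.toReal_pos (hs.2.2.2 y hy).ne' (measure_ne_top P _)

lemma integrable (hs : SuppIoo P V m M) (hVm : Measurable V) : Integrable V P :=
  .of_mem_Icc m M hVm.aemeasurable hs.ae_mem_Icc

lemma le_integral (hs : SuppIoo P V m M) (hVm : Measurable V) : m ≤ ∫ ω, V ω ∂P :=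
  ((convex_Icc m M).integral_mem isClosed_Icc hs.ae_mem_Icc (hs.integrable hVm)).1

lemma integral_lt (hs : SuppIoo P V m M) (hVm : Measurable V) : ∫ ω, V ω ∂P < M := by
  obtain ⟨y, hmy, hyM⟩ := exists_between hs.lt
  refine integral_lt_of_ae_le (hs.integrable hVm) (hs.ae_mem_Icc.mono fun _ h => h.2) ?_
  exact frequently_ae_iff.2
    ((hs.2.2.2 y hmy).trans_le (measure_mono fun _ hω => lt_of_le_of_lt hω hyM)).ne'

lemma mul_pip_lt_phip (hs : SuppIoo P V m M) (hVm : Measurable V) (hy : y < M) :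
    y * Pip P V y < Phip P V y := by
  have hV := hs.integrable hVm
  have hmeas : MeasurableSet {ω | V ω > y} := measurableSet_lt measurable_const hVm
  have hpos : 0 < ∫ ω in {ω | V ω > y}, (V ω - y) ∂P := by
    rw [setIntegral_pos_iff_support_of_nonneg_ae
      ((ae_restrict_mem hmeas).mono fun _ hω => sub_nonneg.2 (le_of_lt hω))
      (hV.sub (integrable_const y)).integrableOn]
    exact (hs.2.2.1 y hy).trans_le (measure_mono fun ω hω => ⟨(sub_pos.2 hω).ne', hω⟩)
  rw [← phip_sub_mul_pip hV] at hpos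
  exact sub_pos.1 hpos

lemma phip_le_mul_pip (hs : SuppIoo P V m M) (hVm : Measurable V) (y : ℝ) :
    Phip P V y ≤ M * Pip P V y := by
  rw [← sub_nonpos, phip_sub_mul_pip (hs.integrable hVm)]
  exact integral_nonpos_of_ae
    (ae_restrict_of_ae (hs.ae_mem_Icc.mono fun _ h => sub_nonpos.2 h.2))

lemma phip_eq_psiTop_mul_pip (hs : SuppIoo P V m M) (y : ℝ) :
    Phip P V y = psiTop P V M y * Pip P V y := by
  unfold psiTop
  split_ifs with hy
  · rw [Psip, div_mul_cancel₀ _ (hs.pip_pos hy).ne']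
  · rw [hs.phip_eq_zero (not_lt.1 hy), hs.pip_eq_zero (not_lt.1 hy), mul_zero]

lemma lt_psiTop (hs : SuppIoo P V m M) (hVm : Measurable V) (hy : y < M) :
    y < psiTop P V M y := by
  rw [psiTop, if_pos hy]
  exact (lt_div_iff₀ (hs.pip_pos hy)).2 (hs.mul_pip_lt_phip hVm hy)

lemma psiTop_le (hs : SuppIoo P V m M) (hVm : Measurable V) (y : ℝ) : psiTop P V M y ≤ M := by
  unfold psiTop
  split_ifs with hy
  · exact (div_le_iff₀ (hs.pip_pos hy)).2 (hs.phip_le_mul_pip hVm y)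
  · exact le_rfl

lemma monotone_psiTop (hs : SuppIoo P V m M) (hVm : Measurable V) :
    Monotone (psiTop P V M) := by
  intro a b hab
  rcases lt_or_ge b M with hb | hb
  · have hcmp := phip_sub_mul_pip_le hVm (hs.integrable hVm) hab (hs.lt_psiTop hVm hb).le
    rw [← hs.phip_eq_psiTop_mul_pip b, sub_self, sub_nonpos, hs.phip_eq_psiTop_mul_pip a] at hcmp
    exact le_of_mul_le_mul_right hcmp (hs.pip_pos (hab.trans_lt hb))
  · exact (hs.psiTop_le hVm a).trans_eq (if_neg hb.not_gt).symm

lemma psiTop_eq_integral (hs : SuppIoo P V m M) (hy : y < m) :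
    psiTop P V M y = ∫ ω, V ω ∂P := by
  have huniv : {ω | V ω > y} =ᵐ[P] univ :=
    eventuallyEq_univ.2 (hs.ae_mem_Icc.mono fun _ h => hy.trans_le h.1)
  rw [psiTop, if_pos (hy.trans hs.lt), Psip, Phip, Pip, setIntegral_congr_set huniv,
    measure_congr huniv, setIntegral_univ, measure_univ, ENNReal.toReal_one, div_one]

lemma integral_le_psiTop (hs : SuppIoo P V m M) (hVm : Measurable V) (y : ℝ) :
    ∫ ω, V ω ∂P ≤ psiTop P V M y := by
  rw [← hs.psiTop_eq_integral ((min_le_right y (m - 1)).trans_lt (sub_one_lt m))]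
  exact hs.monotone_psiTop hVm (min_le_left _ _)

lemma psiTop_mem_Icc (hs : SuppIoo P V m M) (hVm : Measurable V) (y : ℝ) :
    psiTop P V M y ∈ Icc m M :=
  ⟨(hs.le_integral hVm).trans (hs.integral_le_psiTop hVm y), hs.psiTop_le hVm y⟩

lemma measurable_psiTop_comp (hs : SuppIoo P V m M) (hVm : Measurable V) {F : ℝ → ℝ}
    (hF : Measurable F) : Measurable fun z => psiTop P V M (F z) :=
  (hs.monotone_psiTop hVm).measurable.comp hF

lemma isBddMeasurable_psiTop (hs : SuppIoo P V m M) (hVm : Measurable V) {F : ℝ → ℝ}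
    (hF : Measurable F) : IsBddMeasurable fun z => psiTop P V M (F z) :=
  .of_mem_Icc (hs.measurable_psiTop_comp hVm hF) fun z => hs.psiTop_mem_Icc hVm (F z)

lemma phim_le_integral_mul_pim (hs : SuppIoo P V m M) (hVm : Measurable V) (y : ℝ) :
    Phim P V y ≤ (∫ ω, V ω ∂P) * Pim P V y := by
  have htail : (∫ ω, V ω ∂P) * Pip P V y ≤ Phip P V y := by
    rw [hs.phip_eq_psiTop_mul_pip]
    exact mul_le_mul_of_nonneg_right (hs.integral_le_psiTop hVm y) (pip_nonneg y)
  rw [eq_sub_of_add_eq' (phip_add_phim hVm (hs.integrable hVm) y),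
    eq_sub_of_add_eq' (pip_add_pim hVm y), mul_sub, mul_one]
  exact sub_le_sub_left htail _

lemma abs_setIntegral_le (hs : SuppIoo P V m M) (s : Set Ω) :
    |∫ ω in s, V ω ∂P| ≤ max |m| |M| * P.real s := by
  rw [← Real.norm_eq_abs]
  exact norm_setIntegral_le_of_norm_le_const_ae (measure_lt_top P s)
    (ae_restrict_of_ae (hs.ae_mem_Icc.mono fun _ h => abs_le_max_abs_abs h.1 h.2))

lemma measurable_phip (hs : SuppIoo P V m M) (hVm : Measurable V) : Measurable (Phip P V) := by
  have heq : Phip P V = fun y => psiTop P V M y * Pip P V y := funext hs.phip_eq_psiTop_mul_pip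
  rw [heq]
  exact (hs.monotone_psiTop hVm).measurable.mul antitone_pip.measurable

lemma isBddMeasurable_psip (hs : SuppIoo P V m M) (hVm : Measurable V) :
    IsBddMeasurable (Psip P V) where
  measurable := (hs.measurable_phip hVm).div antitone_pip.measurable
  bounded := ⟨max |m| |M|, fun y => by
    rw [Psip, abs_div, abs_of_nonneg (pip_nonneg y)]
    exact div_le_of_le_mul₀ (pip_nonneg y) (le_max_of_le_left (abs_nonneg m))
      (hs.abs_setIntegral_le _)⟩

lemma isBddMeasurable_phim (hs : SuppIoo P V m M) (hVm : Measurable V) :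
    IsBddMeasurable (Phim P V) where
  measurable := by
    have heq : Phim P V = fun y => ∫ ω, V ω ∂P - Phip P V y :=
      funext fun y => eq_sub_of_add_eq' (phip_add_phim hVm (hs.integrable hVm) y)
    rw [heq]
    exact measurable_const.sub (hs.measurable_phip hVm)
  bounded := ⟨max |m| |M|, fun _ => (hs.abs_setIntegral_le _).trans
    (mul_le_of_le_one_right (le_max_of_le_left (abs_nonneg m)) measureReal_le_one)⟩

end SuppIoo

section TailOp

variable {Ω : Type*} [MeasurableSpace Ω] {P : Measure Ω} {V : Ω → ℝ} {m M σ : ℝ} {N : ℕ}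

/-- The right-hand side of (C⁺), with `Ψ⁺` extended by its limit `M` to `[M, ∞)`. -/
noncomputable def tailOp (P : Measure Ω) (V : Ω → ℝ) (M σ : ℝ) (N : ℕ) (R : ℝ → ℝ) : ℝ → ℝ :=
  cplusOp σ N (∫ ω, V ω ∂P) fun y => psiTop P V M (R y)

namespace SuppIoo

variable [IsProbabilityMeasure P] [NeZero N] {R S : ℝ → ℝ}

lemma tailOp_mem_Icc (hs : SuppIoo P V m M) (hVm : Measurable V) (hR : Measurable R) (x : ℝ) :
    tailOp P V M σ N R x ∈ Icc m M :=
  cplusOp_mem_Icc ⟨hs.le_integral hVm, (hs.integral_lt hVm).le⟩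
    (hs.measurable_psiTop_comp hVm hR) (fun y => hs.psiTop_mem_Icc hVm (R y)) x

lemma tailOp_lt (hs : SuppIoo P V m M) (hVm : Measurable V) (hσ : 0 < σ) (hR : Measurable R)
    (x : ℝ) : tailOp P V M σ N R x < M :=
  cplusOp_lt hσ ⟨hs.le_integral hVm, hs.integral_lt hVm⟩
    (hs.measurable_psiTop_comp hVm hR) (fun y => hs.psiTop_mem_Icc hVm (R y)) x

lemma monotone_tailOp (hs : SuppIoo P V m M) (hVm : Measurable V) (hR : Monotone R) :
    Monotone (tailOp P V M σ N R) :=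
  monotone_cplusOp (hs.isBddMeasurable_psiTop hVm hR.measurable)
    ((hs.monotone_psiTop hVm).comp hR) fun y => hs.integral_le_psiTop hVm (R y)

lemma tailOp_mono (hs : SuppIoo P V m M) (hVm : Measurable V) (hR : Measurable R)
    (hS : Measurable S) (hRS : R ≤ S) : tailOp P V M σ N R ≤ tailOp P V M σ N S :=
  cplusOp_mono (hs.isBddMeasurable_psiTop hVm hR) (hs.isBddMeasurable_psiTop hVm hS)
    fun y => hs.monotone_psiTop hVm (hRS y)

lemma runningSup_le_tailOp (hs : SuppIoo P V m M) (hVm : Measurable V) (hRM : ∀ x, R x ≤ M)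
    (hRmeas : Measurable R) (hR : R ≤ tailOp P V M σ N R) :
    runningSup R ≤ tailOp P V M σ N (runningSup R) := fun _ =>
  runningSup_le fun y hyx => calc
    R y ≤ tailOp P V M σ N R y := hR y
    _ ≤ tailOp P V M σ N (runningSup R) y := hs.tailOp_mono hVm hRmeas
        (monotone_runningSup hRM).measurable (le_runningSup hRM) y
    _ ≤ _ := hs.monotone_tailOp hVm (monotone_runningSup hRM) hyx

lemma exists_greatest_tailOp_fixedPoint (hs : SuppIoo P V m M) (hVm : Measurable V) :
    ∃ R, Monotone R ∧ (∀ x, R x ∈ Icc m M) ∧ tailOp P V M σ N R = R ∧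
      ∀ f, Monotone f → (∀ x, f x ∈ Icc m M) → f ≤ tailOp P V M σ N f → f ≤ R :=
  exists_greatest_monotone_fixedPoint hs.lt.le (fun _ => hs.monotone_tailOp hVm)
    (fun _ hf => hs.tailOp_mem_Icc hVm hf.measurable)
    fun _ hf _ hg => hs.tailOp_mono hVm hf.measurable hg.measurable

lemma not_const_of_tailOp_eq (hs : SuppIoo P V m M) (hVm : Measurable V) (hσ : 0 < σ)
    (hfix : tailOp P V M σ N R = R) : ¬ ∃ c, ∀ x, R x = c := by
  rintro ⟨c, hc⟩
  obtain rfl : R = fun _ => c := funext hc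
  have hlim : Tendsto (tailOp P V M σ N fun _ => c) atTop (𝓝 (psiTop P V M c)) :=
    tendsto_cplusOp_atTop (.const _) tendsto_const_nhds
  rw [hfix] at hlim
  have hcM : c < M := hc 0 ▸ congrFun hfix 0 ▸ hs.tailOp_lt hVm hσ measurable_const 0
  exact (hs.lt_psiTop hVm hcM).ne (tendsto_nhds_unique tendsto_const_nhds hlim)

lemma solvesCp_of_tailOp_eq (hs : SuppIoo P V m M) (hVm : Measurable V) (hσ : 0 < σ)
    (hR : Measurable R) (hfix : tailOp P V M σ N R = R) : SolvesCp P V σ N R := by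
  have hlt (y : ℝ) : R y < M := congrFun hfix y ▸ hs.tailOp_lt hVm hσ hR y
  refine (solvesCp_iff hσ ((hs.isBddMeasurable_psip hVm).comp hR)).2 ?_
  simpa only [tailOp, psiTop, hlt, if_true] using hfix

-- If a solution `R` reaches `M`, then `Ψ⁺ ∘ R` eventually takes the junk value `0`, so that `R`
-- tends to `0` at `+∞`; this forces `M = 0`, which is the value of `psiTop` there.
lemma psip_eq_psiTop_of_solvesCp (hs : SuppIoo P V m M) (hVm : Measurable V) (hσ : 0 < σ)
    (hR : Monotone R) (hRM : ∀ x, R x ≤ M) (hsol : SolvesCp P V σ N R) (y : ℝ) :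
    Psip P V (R y) = psiTop P V M (R y) := by
  rcases (hRM y).lt_or_eq with hy | hy
  · rw [psiTop, if_pos hy]
  · have hbdd := (hs.isBddMeasurable_psip hVm).comp hR.measurable
    have hreach : ∀ x ≥ y, R x = M := fun x hx => (hRM x).antisymm (hy ▸ hR hx)
    have hzero : Tendsto (fun x => Psip P V (R x)) atTop (𝓝 0) :=
      tendsto_const_nhds.congr' ((eventually_ge_atTop y).mono fun x hx =>
        (hs.psip_eq_zero (hreach x hx).ge).symm)
    have hlim := tendsto_cplusOp_atTop (σ := σ) (N := N) (e := ∫ ω, V ω ∂P) hbdd hzero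
    rw [(solvesCp_iff hσ hbdd).1 hsol] at hlim
    have hM : M = 0 := tendsto_nhds_unique
      (tendsto_const_nhds.congr' ((eventually_ge_atTop y).mono fun x hx => (hreach x hx).symm)) hlim
    rw [hs.psip_eq_zero hy.ge, psiTop, if_neg hy.not_lt, hM]

lemma tailOp_eq_of_solvesCp (hs : SuppIoo P V m M) (hVm : Measurable V) (hσ : 0 < σ)
    (hR : Monotone R) (hRM : ∀ x, R x ≤ M) (hsol : SolvesCp P V σ N R) :
    tailOp P V M σ N R = R := by
  simpa only [tailOp, hs.psip_eq_psiTop_of_solvesCp hVm hσ hR hRM hsol] using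
    (solvesCp_iff hσ ((hs.isBddMeasurable_psip hVm).comp hR.measurable)).1 hsol

end SuppIoo

end TailOp

section EquationE

variable {Ω : Type*} [MeasurableSpace Ω] {P : Measure Ω} {V : Ω → ℝ} {m M σ : ℝ} {N : ℕ}
  {F : ℝ → ℝ}

lemma measurable_phig (hσ : 0 < σ) (F : ℝ → ℝ) : Measurable (phig P V σ F) := by
  have hconv (h : ℝ → ℝ) : Measurable fun x => ∫ z, h (F z) * gq σ (x - z) :=
    measurable_integral_mul_comp_sub (continuous_gq σ).measurable (fun z => (gq_pos hσ z).ne') _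
  exact .ite measurableSet_Ici ((hconv _).div (hconv _)) ((hconv _).div (hconv _))

namespace SuppIoo

variable [IsProbabilityMeasure P]

lemma isBddMeasurable_phig (hs : SuppIoo P V m M) (hσ : 0 < σ) (F : ℝ → ℝ) :
    IsBddMeasurable (phig P V σ F) := by
  refine ⟨measurable_phig hσ F, max |m| |M|, fun x => ?_⟩
  have hratio {f g : ℝ → ℝ} (hfg : ∀ z, |f z| ≤ max |m| |M| * g z) :
      |(∫ z, f z * gq σ (x - z)) / ∫ z, g z * gq σ (x - z)| ≤ max |m| |M| := by
    refine abs_integral_div_integral_le (le_max_of_le_left (abs_nonneg m)) fun z => ?_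
    rw [abs_mul, abs_of_pos (gq_pos hσ _), ← mul_assoc]
    exact mul_le_mul_of_nonneg_right (hfg z) (gq_pos hσ _).le
  unfold phig
  split_ifs
  · exact hratio fun z => hs.abs_setIntegral_le _
  · exact hratio fun z => hs.abs_setIntegral_le _

lemma phip_le_gaussAvg (hs : SuppIoo P V m M) (hVm : Measurable V) (hσ : 0 < σ)
    (hF : Measurable F) (hFM : ∃ᵐ z, F z < M) (z : ℝ) :
    phip P V σ F z ≤ gaussAvg (.dirac 1) σ (fun y => psiTop P V M (F y)) z := by
  have hden : 0 < ∫ y, Pip P V (F y) * gq σ (z - y) :=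
    integral_mul_gq_pos hσ (isBddMeasurable_pip hF) (fun _ => pip_nonneg _)
      (hFM.mono fun _ hy => (hs.pip_pos hy).ne') z
  have hanti : Antivary (fun y => psiTop P V M (F y)) fun y => Pip P V (F y) :=
    ((hs.monotone_psiTop hVm).antivary antitone_pip).comp_right F
  rw [phip, div_le_iff₀ hden, ← gaussAvg_dirac_one hσ fun y => Phip P V (F y),
    ← gaussAvg_dirac_one hσ fun y => Pip P V (F y)]
  simp only [hs.phip_eq_psiTop_mul_pip]
  exact gaussAvg_mul_le_of_antivary (hs.isBddMeasurable_psiTop hVm hF) (isBddMeasurable_pip hF)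
    hanti z

lemma phim_le_integral (hs : SuppIoo P V m M) (hVm : Measurable V) (hσ : 0 < σ)
    (hF : Measurable F) (hFm : ∃ᵐ z, m < F z) (z : ℝ) : phim P V σ F z ≤ ∫ ω, V ω ∂P := by
  have hden : 0 < ∫ y, Pim P V (F y) * gq σ (z - y) :=
    integral_mul_gq_pos hσ (isBddMeasurable_pim hF) (fun _ => pim_nonneg _)
      (hFm.mono fun _ hy => (hs.pim_pos hy).ne') z
  rw [phim, div_le_iff₀ hden, ← integral_const_mul]
  refine integral_mono
    (((hs.isBddMeasurable_phim hVm).comp hF).integrable_mul (integrable_gq hσ z))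
    (((isBddMeasurable_pim hF).integrable_mul (integrable_gq hσ z)).const_mul _) fun y => ?_
  simp only [← mul_assoc]
  exact mul_le_mul_of_nonneg_right (hs.phim_le_integral_mul_pim hVm (F y)) (gq_pos hσ _).le

lemma phig_le_splicedAvg (hs : SuppIoo P V m M) (hVm : Measurable V) (hσ : 0 < σ)
    (hF : Measurable F) (hFM : ∃ᵐ z, F z < M) (hFm : ∃ᵐ z, m < F z) :
    phig P V σ F ≤ splicedAvg σ (∫ ω, V ω ∂P) fun y => psiTop P V M (F y) := fun z => by
  rcases le_or_gt 0 z with hz | hz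
  · rw [phig, if_pos hz, splicedAvg_of_nonneg hz]
    exact hs.phip_le_gaussAvg hVm hσ hF hFM z
  · rw [phig, if_neg hz.not_ge, splicedAvg_of_neg hz]
    exact hs.phim_le_integral hVm hσ hF hFm z

variable [NeZero N]

lemma gaussAvg_phig_eq_of_solvesE (hs : SuppIoo P V m M) (hσ : 0 < σ)
    (hE : SolvesE P V σ N F) : gaussAvg (slopeLaw N) σ (phig P V σ F) = F :=
  funext fun x => by rw [hE x, integral_kernel_mul N hσ (hs.isBddMeasurable_phig hσ F)]

lemma measurable_of_solvesE (hs : SuppIoo P V m M) (hσ : 0 < σ) (hE : SolvesE P V σ N F) :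
    Measurable F :=
  hs.gaussAvg_phig_eq_of_solvesE hσ hE ▸ (hs.isBddMeasurable_phig hσ F).gaussAvg.measurable

-- If `F = M` a.e., then `φ⁻ = E[V]`, so `F` tends to `E[V] < M` at `-∞`.
lemma frequently_lt_of_solvesE (hs : SuppIoo P V m M) (hVm : Measurable V) (hσ : 0 < σ)
    (hF : ∀ x, F x ≤ M) (hE : SolvesE P V σ N F) : ∃ᵐ z, F z < M := fun hnot => by
  have hFM : ∀ᵐ z, F z = M := hnot.mono fun z hz => (hF z).antisymm (not_lt.1 hz)
  have hpim := pip_add_pim (P := P) hVm M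
  have hphim := phip_add_phim hVm (hs.integrable hVm) M
  rw [hs.pip_eq_zero le_rfl, zero_add] at hpim
  rw [hs.phip_eq_zero le_rfl, zero_add] at hphim
  have hphig : Tendsto (phig P V σ F) atBot (𝓝 (∫ ω, V ω ∂P)) :=
    tendsto_const_nhds.congr' ((eventually_lt_atBot 0).mono fun x hx => by
      rw [phig, if_neg hx.not_ge, phim, integral_comp_mul_gq_of_ae_eq hσ _ hFM,
        integral_comp_mul_gq_of_ae_eq hσ _ hFM, hpim, hphim, div_one])
  have hlim := tendsto_gaussAvg_atBot (σ := σ) (slopeLaw_ae_pos N)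
    (hs.isBddMeasurable_phig hσ F) hphig
  rw [hs.gaussAvg_phig_eq_of_solvesE hσ hE] at hlim
  exact (hs.integral_lt hVm).ne (eq_of_tendsto_of_ae_eq hlim hFM)

-- If `F = m` a.e., then `φ⁺ = Ψ⁺(m)`, so `F` tends to `Ψ⁺(m) > m` at `+∞`.
lemma frequently_gt_of_solvesE (hs : SuppIoo P V m M) (hVm : Measurable V) (hσ : 0 < σ)
    (hF : ∀ x, m ≤ F x) (hE : SolvesE P V σ N F) : ∃ᵐ z, m < F z := fun hnot => by
  have hFm : ∀ᵐ z, F z = m := hnot.mono fun z hz => (not_lt.1 hz).antisymm (hF z)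
  have hphig : Tendsto (phig P V σ F) atTop (𝓝 (psiTop P V M m)) :=
    tendsto_const_nhds.congr' ((eventually_ge_atTop 0).mono fun x hx => by
      rw [phig, if_pos hx, phip, integral_comp_mul_gq_of_ae_eq hσ _ hFm,
        integral_comp_mul_gq_of_ae_eq hσ _ hFm, psiTop, if_pos hs.lt, Psip])
  have hlim := tendsto_gaussAvg_atTop (σ := σ) (slopeLaw_ae_pos N)
    (hs.isBddMeasurable_phig hσ F) hphig
  rw [hs.gaussAvg_phig_eq_of_solvesE hσ hE] at hlim
  exact (hs.lt_psiTop hVm hs.lt).ne' (eq_of_tendsto_of_ae_eq hlim hFm)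

lemma le_tailOp_of_solvesE (hs : SuppIoo P V m M) (hVm : Measurable V) (hσ : 0 < σ)
    (hF : ∀ x, F x ∈ Icc m M) (hE : SolvesE P V σ N F) : F ≤ tailOp P V M σ N F := by
  have hFmeas := hs.measurable_of_solvesE hσ hE
  calc F = gaussAvg (slopeLaw N) σ (phig P V σ F) := (hs.gaussAvg_phig_eq_of_solvesE hσ hE).symm
    _ ≤ tailOp P V M σ N F :=
      gaussAvg_mono (hs.isBddMeasurable_phig hσ F)
        ((hs.isBddMeasurable_psiTop hVm hFmeas).splicedAvg σ _)
        (hs.phig_le_splicedAvg hVm hσ hFmeas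
          (hs.frequently_lt_of_solvesE hVm hσ (fun x => (hF x).2) hE)
          (hs.frequently_gt_of_solvesE hVm hσ (fun x => (hF x).1) hE))

end SuppIoo

end EquationE

/-- Among nondecreasing functions with values in `[m,M]`, (C⁺) has a maximal
solution; it is not constant, and it dominates every solution of (E) with values in `[m,M]`. -/
theorem stmt13 {Ω : Type*} [MeasurableSpace Ω] (P : Measure Ω) [IsProbabilityMeasure P]
    (V : Ω → ℝ) (hVmeas : Measurable V) (hV : Integrable V P)
    (m M : ℝ) (hsupp : SuppIoo P V m M)
    (σ : ℝ) (hσ : 0 < σ) (N : ℕ) (hN : 1 ≤ N) :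
    ∃ Rstar : ℝ → ℝ, Monotone Rstar ∧ (∀ x, Rstar x ∈ Set.Icc m M) ∧
      SolvesCp P V σ N Rstar ∧
      (∀ r : ℝ → ℝ, Monotone r → (∀ x, r x ∈ Set.Icc m M) → SolvesCp P V σ N r →
        ∀ x, r x ≤ Rstar x) ∧
      (¬ ∃ c : ℝ, ∀ x, Rstar x = c) ∧
      (∀ F : ℝ → ℝ, (∀ x, F x ∈ Set.Icc m M) → SolvesE P V σ N F →
        ∀ x, F x ≤ Rstar x) := by
  have : NeZero N := ⟨by lia⟩
  obtain ⟨R, hRmono, hRmem, hfix, hmax⟩ :=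
    hsupp.exists_greatest_tailOp_fixedPoint (σ := σ) (N := N) hVmeas
  refine ⟨R, hRmono, hRmem, hsupp.solvesCp_of_tailOp_eq hVmeas hσ hRmono.measurable hfix,
    fun r hrmono hrmem hr => ?_, hsupp.not_const_of_tailOp_eq hVmeas hσ hfix,
    fun F hF hE x => ?_⟩
  · exact hmax r hrmono hrmem
      (hsupp.tailOp_eq_of_solvesCp hVmeas hσ hrmono (fun x => (hrmem x).2) hr).ge
  · have hFM (x : ℝ) : F x ≤ M := (hF x).2
    have hFR : runningSup F ≤ R :=
      hmax _ (monotone_runningSup hFM)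
        (fun x => ⟨(hF x).1.trans (le_runningSup hFM x), runningSup_le fun y _ => hFM y⟩)
        (hsupp.runningSup_le_tailOp hVmeas hFM (hsupp.measurable_of_solvesE hσ hE)
          (hsupp.le_tailOp_of_solvesE hVmeas hσ hF hE))
    exact (le_runningSup hFM x).trans (hFR x)
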